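/- Let (A, +, ∘) be a strongly nilpotent ℚ-brace, and for a, b ∈ A let a·b denote the derived product (the weak limit of 2^n·(((1/2^n)·a)*b)), so that (A, +, ·) is a nilpotent pre-Lie algebra over ℚ. Let W, Ω, and e^{L_x} be formed from the product ·, i.e. L_x(y) = x·y, e^{L_x}(y) = Σ_{k≥0}(1/k!)·L_x^k(y), W(x) = Σ_{k≥1}(1/k!)·L_x^{k−1}(x), and Ω is the inverse of W. Then the original brace multiplication coincides with the group-of-flows multiplication of (A, +, ·): for all a, b ∈ A, a∘b = a + e^{L_{Ω(a)}}(b). -/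

import Mathlib

/-!
Write `λ_a(b) = b + a * b`, so that `a ∘ b = a + λ_a(b)`. An element `a` of the brace acts on
`A × ℚ` by the unipotent map `T_a : (v, c) ↦ (λ_a(v) + c a, c)`, and `a ↦ T_a` turns `∘` into
composition. The logarithm of `T_a` has the form `(v, c) ↦ (D v + c u, 0)`; hence
`λ_a = e^D` and `a = ∑ D^i u / (i+1)!`. If `D` is left multiplication by `u` for the derived
product, the last equation says `a = W(u)`, so `u = Ω(a)`, and `a ∘ b = a + e^D b` is the claim.

To identify `D`, note that `∘` has square roots (successive approximation along the strong radical
chain, `exists_sqrt`), and logarithms of unipotent maps are unique. So `exp (s log T_a)` is `T_g`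
for some `g = g(s)` in the brace, for every `s = 1 / 2 ^ n` (`exists_flow`). Thus
`g(s) = s u + O(s²)` and `g(s) * b = s D b + O(s²)`, whereas the derived product is defined by
`(s u) * b`, and nothing is assumed about the dependence of `*` on its left factor. What is needed
is that `x * b` is polynomial in `s` whenever `x` is, with divisibility by powers of `s` preserved
(`tame_of_mem`). This follows by downward induction along the chain: a monomial `s ^ i x` with
`x ∈ A^[k]` differs from a sequence of points of a one-parameter subgroup by a polynomial with
coefficients in `A^[k+1]`, and sums are turned into `∘`-products by `a + b = a ∘ λ_a⁻¹(b)`.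
Then `(s u) * b = s D b + O(s²)`, and the weak limit gives `u · b = D b` (`derived_eq`).
-/

open Filter Topology

/-- A left brace: an abelian group `(A, +)` together with a group operation `∘`
satisfying `a ∘ (b + c) + a = a ∘ b + a ∘ c`. -/
structure LeftBrace (A : Type*) [AddCommGroup A] where
  circ : A → A → A
  one : A
  inv : A → A
  circ_assoc : ∀ a b c : A, circ (circ a b) c = circ a (circ b c)
  one_circ : ∀ a : A, circ one a = a
  circ_one : ∀ a : A, circ a one = a
  inv_circ : ∀ a : A, circ (inv a) a = one
  left_dist : ∀ a b c : A, circ a (b + c) + a = circ a b + circ a c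

/-- `a * b = a ∘ b - a - b`. -/
def LeftBrace.star {A : Type*} [AddCommGroup A] (B : LeftBrace A) (a b : A) : A :=
  B.circ a b - a - b

/-- The strong radical chain: `strongChain B m` is `A^[m+1]`; `A^[1] = A` and for
`i > 1`, `A^[i]` is the additive subgroup generated by all `a * b` with
`a ∈ A^[j]`, `b ∈ A^[i-j]`, `0 < j < i`. (Inside the binder `j ≤ m` we have
`min j m = j`, so the generating set below is exactly the intended one.) -/
def LeftBrace.strongChain {A : Type*} [AddCommGroup A] (B : LeftBrace A) : ℕ → AddSubgroup A
  | 0 => ⊤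
  | (m+1) => AddSubgroup.closure
      {x : A | ∃ j ≤ m, ∃ u ∈ LeftBrace.strongChain B (min j m),
        ∃ v ∈ LeftBrace.strongChain B (m - j), x = B.star u v}
termination_by n => n
decreasing_by
  · exact Nat.lt_succ_of_le (Nat.min_le_right j m)
  · exact Nat.lt_succ_of_le (Nat.sub_le m j)

/-- A brace is strongly nilpotent if `A^[n] = 0` for some `n`. -/
def LeftBrace.StronglyNilpotent {A : Type*} [AddCommGroup A] (B : LeftBrace A) : Prop :=
  ∃ n : ℕ, B.strongChain n = ⊥

/-- A ℚ-brace: the additive group is a ℚ-vector space and `a * (e • b) = e • (a * b)`. -/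
def LeftBrace.IsQBrace {A : Type*} [AddCommGroup A] [Module ℚ A] (B : LeftBrace A) : Prop :=
  ∀ (e : ℚ) (a b : A), B.star a (e • b) = e • B.star a b

/-- A pre-Lie algebra over a field `F`: an `F`-vector space with a bilinear
product satisfying `(x·y)·z − x·(y·z) = (y·x)·z − y·(x·z)`. -/
structure PreLieAlg (F : Type*) (A : Type*) [Field F] [AddCommGroup A] [Module F A] where
  mul : A → A → A
  mul_add : ∀ a b c : A, mul a (b + c) = mul a b + mul a c
  add_mul : ∀ a b c : A, mul (a + b) c = mul a c + mul b c
  smul_mul : ∀ (e : F) (a b : A), mul (e • a) b = e • mul a b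
  mul_smul : ∀ (e : F) (a b : A), mul a (e • b) = e • mul a b
  pre_lie : ∀ a b c : A,
    mul (mul a b) c - mul a (mul b c) = mul (mul b a) c - mul b (mul a c)

/-- `P.IsProd x n` : `x` is a product of `n` elements of `A`, with any
distribution of brackets. -/
inductive PreLieAlg.IsProd {F A : Type*} [Field F] [AddCommGroup A] [Module F A]
    (P : PreLieAlg F A) : A → ℕ → Prop
  | single (a : A) : PreLieAlg.IsProd P a 1
  | node {u v : A} {n m : ℕ} : PreLieAlg.IsProd P u n → PreLieAlg.IsProd P v m →
      PreLieAlg.IsProd P (P.mul u v) (n + m)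

/-- `A` is nilpotent of index `n` (`0 < n`): every product of `n` elements
(with any distribution of brackets) is zero. -/
def PreLieAlg.IsNilpotentOf {F A : Type*} [Field F] [AddCommGroup A] [Module F A]
    (P : PreLieAlg F A) (n : ℕ) : Prop :=
  0 < n ∧ ∀ x : A, P.IsProd x n → x = 0

/-- `e^{L_x}(b) = Σ_{k ≥ 0} (1/k!) • L_x^k(b)`; under nilpotency of index `n`
all terms with `k ≥ n - 1` vanish, so the series equals this truncated sum. -/
def PreLieAlg.expL {F A : Type*} [Field F] [AddCommGroup A] [Module F A]
    (P : PreLieAlg F A) (n : ℕ) (x b : A) : A :=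
  ∑ k ∈ Finset.range n, ((Nat.factorial k : F))⁻¹ • (P.mul x)^[k] b

/-- `W(a) = Σ_{k ≥ 1} (1/k!) • L_a^{k-1}(a)`; under nilpotency of index `n`
all terms with `k ≥ n` vanish, so the series equals this truncated sum. -/
def PreLieAlg.W {F A : Type*} [Field F] [AddCommGroup A] [Module F A]
    (P : PreLieAlg F A) (n : ℕ) (a : A) : A :=
  ∑ k ∈ Finset.range n, ((Nat.factorial (k + 1) : F))⁻¹ • (P.mul a)^[k] a

/-- The group-of-flows multiplication `a ∘ b = a + e^{L_{Ω(a)}}(b)`. -/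
def PreLieAlg.flow {F A : Type*} [Field F] [AddCommGroup A] [Module F A]
    (P : PreLieAlg F A) (n : ℕ) (Ω : A → A) (a b : A) : A :=
  a + P.expL n (Ω a) b

/-- `a * b = a ∘ b - a - b` for the group-of-flows multiplication. -/
def PreLieAlg.flowStar {F A : Type*} [Field F] [AddCommGroup A] [Module F A]
    (P : PreLieAlg F A) (n : ℕ) (Ω : A → A) (a b : A) : A :=
  P.flow n Ω a b - a - b

/-- `mul` is the derived product of the brace `B`: `mul a b` is the weak limit of
`2^n • (((1/2^n) • a) * b)`. -/
def LeftBrace.IsDerivedMul {A : Type*} [AddCommGroup A] [Module ℚ A] (B : LeftBrace A)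
    (mul : A → A → A) : Prop :=
  ∀ a b : A, ∀ φ : A →ₗ[ℚ] ℚ,
    Tendsto (fun n : ℕ =>
        ((φ ((2 ^ n : ℚ) • B.star (((1 : ℚ) / 2 ^ n) • a) b) : ℚ) : ℝ))
      atTop (𝓝 ((φ (mul a b) : ℚ) : ℝ))


namespace QBraceFlow

open scoped Polynomial
open Polynomial (X C aeval aeval_X aeval_C aeval_comp aeval_monomial)

/-! ### Exponential and logarithm of nilpotent elements -/

section ExpLog

variable {R : Type*} [Ring R] [Algebra ℚ R]

theorem isNilpotent_aeval_mul {N : R} (hN : IsNilpotent N) (p : ℚ[X]) :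
    IsNilpotent (aeval N p * N) := by
  have h := (Commute.all p X).map (aeval (R := ℚ) N)
  rw [aeval_X] at h
  exact h.isNilpotent_mul_left hN

/-- The start of the exponential series, with a remainder divisible by `E ^ 2`. -/
theorem exp_expand {E : R} (hE : IsNilpotent E) :
    ∃ c : ℚ[X], IsNilpotent.exp E = 1 + E + E ^ 2 * aeval E c := by
  obtain ⟨k, hk⟩ := hE
  refine ⟨∑ i ∈ Finset.range k, C (((i + 2).factorial : ℚ)⁻¹) * X ^ i, ?_⟩
  rw [IsNilpotent.exp_eq_sum (k := k + 2) (by rw [pow_add, hk, zero_mul]),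
    Finset.sum_range_succ', Finset.sum_range_succ']
  simp only [map_sum, map_mul, aeval_C, map_pow, aeval_X, Finset.mul_sum]
  rw [add_assoc, add_comm]
  congr 1
  · simp [add_comm]
  · refine Finset.sum_congr rfl fun i _ => ?_
    rw [← Algebra.smul_def, mul_smul_comm, ← pow_add, add_comm 2 i]

/-- Successive approximation of the logarithm of `1 + N`: each step squares the error
of the previous one, up to a unit. -/
theorem log_approx {N : R} (hN : IsNilpotent N) (m : ℕ) :
    ∃ p q : ℚ[X], 1 + N = IsNilpotent.exp (aeval N p * N) * (1 + aeval N (X ^ (m + 1) * q)) := by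
  induction m with
  | zero => exact ⟨0, 1, by simp⟩
  | succ m ih =>
    obtain ⟨p, q, h⟩ := ih
    set E := aeval N (X ^ (m + 1) * q) with hE
    have hE' : E = aeval N (X ^ m * q) * N := by
      rw [hE, show X ^ (m + 1) * q = (X ^ m * q) * X by ring, map_mul (aeval N) (X ^ m * q) X, aeval_X]
    have hEn : IsNilpotent E := hE' ▸ isNilpotent_aeval_mul hN _
    obtain ⟨c, hc⟩ := exp_expand hEn.neg
    refine ⟨p + X ^ m * q,
      X ^ m * q ^ 2 * (c.comp (-(X ^ (m + 1) * q)) * (1 + X ^ (m + 1) * q) - 1), ?_⟩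
    have hcomm : Commute (aeval N p * N) E := by
      have := (Commute.all (p * X) (X ^ (m + 1) * q)).map (aeval (R := ℚ) N)
      simpa only [map_mul (aeval N) p X, aeval_X] using this
    rw [map_add, add_mul, ← hE', IsNilpotent.exp_add_of_commute hcomm
      (isNilpotent_aeval_mul hN p) hEn, h, mul_assoc]
    congr 1
    have key : IsNilpotent.exp (-E) * (1 + E) = 1 + aeval N (X ^ (m + 1 + 1) *
        (X ^ m * q ^ 2 * (c.comp (-(X ^ (m + 1) * q)) * (1 + X ^ (m + 1) * q) - 1))) := by
      have h1 : aeval (-E) c = aeval N (c.comp (-(X ^ (m + 1) * q))) := by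
        rw [aeval_comp, map_neg, ← hE]
      rw [hc, h1, hE]
      have hid := congrArg (aeval N) (show (1 + -(X ^ (m + 1) * q) + (-(X ^ (m + 1) * q)) ^ 2 *
          c.comp (-(X ^ (m + 1) * q))) * (1 + X ^ (m + 1) * q) = 1 + X ^ (m + 1 + 1) *
        (X ^ m * q ^ 2 * (c.comp (-(X ^ (m + 1) * q)) * (1 + X ^ (m + 1) * q) - 1)) by ring)
      simpa only [map_mul, map_add, map_sub, map_one, map_neg, map_pow] using hid
    rw [← key, ← mul_assoc, IsNilpotent.exp_mul_exp_neg_self hEn, one_mul]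

theorem exists_log {N : R} (hN : IsNilpotent N) :
    ∃ p : ℚ[X], IsNilpotent.exp (aeval N p * N) = 1 + N := by
  obtain ⟨m, hm⟩ := id hN
  obtain ⟨p, q, h⟩ := log_approx hN m
  refine ⟨p, ?_⟩
  rw [h, map_mul, map_pow, aeval_X, pow_succ, hm]
  simp

theorem exp_injective {X Y : R} (hX : IsNilpotent X) (hY : IsNilpotent Y) (hXY : Commute X Y)
    (h : IsNilpotent.exp X = IsNilpotent.exp Y) : X = Y := by
  have hZ : IsNilpotent (X - Y) := hXY.isNilpotent_sub hX hY
  have h1 : IsNilpotent.exp (X - Y) = 1 := by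
    rw [sub_eq_add_neg, IsNilpotent.exp_add_of_commute hXY.neg_right hX hY.neg, h,
      IsNilpotent.exp_mul_exp_neg_self hY]
  obtain ⟨c, hc⟩ := exp_expand hZ
  have hu : IsUnit (1 + aeval (X - Y) c * (X - Y)) :=
    (isNilpotent_aeval_mul hZ c).isUnit_one_add
  have hcomm : aeval (X - Y) c * (X - Y) = (X - Y) * aeval (X - Y) c := by
    have := (Commute.all c Polynomial.X).map (aeval (X - Y))
    simpa using this.eq
  have h2 : (X - Y) * (1 + aeval (X - Y) c * (X - Y)) = 0 := by
    rw [hcomm, mul_add, mul_one, ← mul_assoc, ← pow_two]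
    rw [h1, add_assoc] at hc
    simpa using hc.symm
  exact sub_eq_zero.mp ((hu.mul_left_eq_zero).mp h2)

theorem exp_nsmul {X : R} (hX : IsNilpotent X) (k : ℕ) :
    IsNilpotent.exp (k • X) = IsNilpotent.exp X ^ k := by
  induction k with
  | zero => simp
  | succ k ih =>
    rw [succ_nsmul, IsNilpotent.exp_add_of_commute ((Commute.refl X).smul_left k)
      (hX.smul k) hX, ih, pow_succ]

end ExpLog

/-! ### Left braces -/

section Brace

variable {A : Type*} [AddCommGroup A] (B : LeftBrace A)

theorem circ_zero (a : A) : B.circ a 0 = a := by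
  have h := B.left_dist a 0 0
  rw [add_zero] at h
  exact (add_left_cancel h).symm

theorem one_eq_zero : B.one = 0 := by
  rw [← circ_zero B B.one, B.one_circ]

theorem inv_circ (a : A) : B.circ (B.inv a) a = 0 := by
  rw [B.inv_circ, one_eq_zero]

theorem circ_inv (a : A) : B.circ a (B.inv a) = 0 := by
  have h : B.circ (B.inv (B.inv a)) (B.circ (B.circ (B.inv a) a) (B.inv a)) = B.one := by
    rw [B.inv_circ, B.one_circ, B.inv_circ]
  rw [B.circ_assoc, ← B.circ_assoc, B.inv_circ, B.one_circ] at h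
  rw [h, one_eq_zero]

theorem inv_inv (a : A) : B.inv (B.inv a) = a := by
  have h := B.circ_assoc (B.inv (B.inv a)) (B.inv a) a
  rwa [B.inv_circ, B.inv_circ, B.one_circ, B.circ_one, eq_comm] at h

theorem inv_circ_rev (a b : A) : B.inv (B.circ a b) = B.circ (B.inv b) (B.inv a) := by
  have h : B.circ (B.circ (B.inv b) (B.inv a)) (B.circ a b) = B.one := by
    rw [B.circ_assoc, ← B.circ_assoc (B.inv a), B.inv_circ, B.one_circ, B.inv_circ]
  have h2 := congrArg (fun z => B.circ z (B.inv (B.circ a b))) h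
  simp only [B.one_circ] at h2
  rwa [B.circ_assoc, circ_inv, circ_zero, eq_comm] at h2

theorem circ_eq (a b : A) : B.circ a b = a + b + B.star a b := by
  rw [LeftBrace.star]; abel

theorem star_add (a b c : A) : B.star a (b + c) = B.star a b + B.star a c := by
  have h := eq_sub_of_add_eq (B.left_dist a b c)
  simp only [LeftBrace.star, h]; abel

theorem star_zero (a : A) : B.star a 0 = 0 := by
  simp [LeftBrace.star, circ_zero]

theorem zero_star (c : A) : B.star 0 c = 0 := by
  rw [LeftBrace.star, ← one_eq_zero B, B.one_circ, one_eq_zero]; simp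

theorem star_circ (a b c : A) :
    B.star (B.circ a b) c = B.star a c + B.star b c + B.star a (B.star b c) := by
  have h := B.circ_assoc a b c
  rw [circ_eq B (B.circ a b), circ_eq B a (B.circ b c), circ_eq B b c, circ_eq B a b, star_add,
    star_add] at h
  rw [circ_eq B a b]
  have h' := sub_eq_zero.mpr h
  rw [← sub_eq_zero, ← h']; abel

theorem star_inv_cancel (a c : A) :
    B.star a c + B.star (B.inv a) c + B.star a (B.star (B.inv a) c) = 0 := by
  rw [← star_circ, circ_inv, zero_star]

/-- Addition in terms of `∘`: `a + b = a ∘ λ_a⁻¹(b)` where `λ_a(c) = c + a * c`. -/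
theorem add_eq_circ (a b : A) : a + b = B.circ a (b + B.star (B.inv a) b) := by
  have h := star_inv_cancel B a b
  rw [circ_eq, star_add]
  rw [show a + (b + B.star (B.inv a) b) + (B.star a b + B.star a (B.star (B.inv a) b)) = a + b +
    (B.star a b + B.star (B.inv a) b + B.star a (B.star (B.inv a) b)) by abel, h, add_zero]

/-! ### The strong radical chain -/

theorem star_mem {k l : ℕ} {u v : A} (hu : u ∈ B.strongChain k) (hv : v ∈ B.strongChain l) :
    B.star u v ∈ B.strongChain (k + l + 1) := by
  rw [LeftBrace.strongChain]
  refine AddSubgroup.subset_closure ⟨k, by omega, u, ?_, v, ?_, rfl⟩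
  · rwa [min_eq_left (by omega)]
  · rwa [Nat.add_sub_cancel_left]

theorem mem_zero (x : A) : x ∈ B.strongChain 0 := by
  rw [LeftBrace.strongChain]; trivial

theorem chain_succ_le (m : ℕ) : B.strongChain (m + 1) ≤ B.strongChain m := by
  induction m using Nat.strong_induction_on with
  | _ m ih =>
    cases m with
    | zero => exact fun x _ => mem_zero B x
    | succ m =>
      rw [LeftBrace.strongChain, AddSubgroup.closure_le]
      rintro x ⟨j, hj, u, hu, v, hv, rfl⟩
      rw [min_eq_left hj] at hu
      rcases Nat.lt_or_ge m j with h | h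
      · obtain rfl : j = m + 1 := by omega
        simpa using star_mem B (ih m (by omega) hu) (mem_zero B v)
      · rw [show m + 1 - j = (m - j) + 1 by omega] at hv
        have := star_mem B hu (ih (m - j) (by omega) hv)
        rwa [show j + (m - j) + 1 = m + 1 by omega] at this

theorem chain_anti : Antitone B.strongChain := antitone_nat_of_succ_le (chain_succ_le B)

theorem star_mem_left {l : ℕ} (u : A) {v : A} (hv : v ∈ B.strongChain l) :
    B.star u v ∈ B.strongChain (l + 1) := by
  simpa using star_mem B (mem_zero B u) hv

theorem star_mem_right {l : ℕ} {u : A} (v : A) (hu : u ∈ B.strongChain l) :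
    B.star u v ∈ B.strongChain (l + 1) := by
  simpa using star_mem B hu (mem_zero B v)

variable [Module ℚ A]

variable {B}

theorem chain_smul (hQ : B.IsQBrace) (e : ℚ) (m : ℕ) {x : A} (hx : x ∈ B.strongChain m) :
    e • x ∈ B.strongChain m := by
  induction m using Nat.strong_induction_on generalizing x with
  | _ m ih =>
    cases m with
    | zero => exact mem_zero B _
    | succ m =>
      rw [LeftBrace.strongChain] at hx
      induction hx using AddSubgroup.closure_induction with
      | mem x hx =>
        obtain ⟨j, hj, u, hu, v, hv, rfl⟩ := hx
        rw [min_eq_left hj] at hu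
        rw [← hQ]
        have := star_mem B hu (ih (m - j) (by omega) hv)
        rwa [show j + (m - j) + 1 = m + 1 by omega] at this
      | zero => rw [smul_zero]; exact zero_mem _
      | add x y _ _ hx hy => rw [smul_add]; exact add_mem hx hy
      | neg x _ hx => rw [smul_neg]; exact neg_mem hx

/-! ### The affine representation and square roots -/

/-- The chain `A^[k+1]` as a family of `ℚ`-subspaces. -/
def chain (hQ : B.IsQBrace) (k : ℕ) : Submodule ℚ A :=
  { B.strongChain k with smul_mem' := fun e _ hx => chain_smul hQ e k hx }

theorem mem_chain {hQ : B.IsQBrace} {k : ℕ} {x : A} : x ∈ chain hQ k ↔ x ∈ B.strongChain k :=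
  Iff.rfl

/-- Left multiplication `b ↦ a * b`. -/
def starL (hQ : B.IsQBrace) (a : A) : A →ₗ[ℚ] A where
  toFun := B.star a
  map_add' := star_add B a
  map_smul' e b := hQ e a b

@[simp] theorem starL_apply (hQ : B.IsQBrace) (a b : A) : starL hQ a b = B.star a b := rfl

/-- Elements `a` act on `A × ℚ` by affine maps `(v, c) ↦ (λ_a(v) + c a, c)`; this is the
difference of that action and the identity. -/
def aff (hQ : B.IsQBrace) (a : A) : Module.End ℚ (A × ℚ) :=
  (LinearMap.inl ℚ A ℚ).comp ((starL hQ a).coprod (LinearMap.toSpanSingleton ℚ A a))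

theorem aff_apply (hQ : B.IsQBrace) (a : A) (w : A × ℚ) :
    aff hQ a w = (B.star a w.1 + w.2 • a, 0) := by
  simp [aff]

theorem one_add_aff_circ (hQ : B.IsQBrace) (a b : A) :
    1 + aff hQ (B.circ a b) = (1 + aff hQ a) * (1 + aff hQ b) := by
  refine LinearMap.ext fun w => ?_
  simp only [LinearMap.add_apply, Module.End.one_apply, Module.End.mul_apply, aff_apply]
  refine Prod.ext ?_ (by simp)
  simp only [Prod.fst_add, Prod.snd_add, star_add, star_circ]
  rw [circ_eq, smul_add, smul_add, ← hQ]
  simp only [add_zero]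
  abel

theorem aff_pow_mem (hQ : B.IsQBrace) (a : A) (m : ℕ) (w : A × ℚ) :
    ((aff hQ a ^ (m + 1)) w).1 ∈ B.strongChain m ∧ ((aff hQ a ^ (m + 1)) w).2 = 0 := by
  induction m with
  | zero => exact ⟨mem_zero B _, by simp [aff_apply]⟩
  | succ m ih =>
    rw [pow_succ', Module.End.mul_apply, aff_apply, ih.2]
    simpa using star_mem_left B a ih.1

theorem aff_nilpotent (hQ : B.IsQBrace) {K : ℕ} (hK : B.strongChain K = ⊥) (a : A) :
    IsNilpotent (aff hQ a) := by
  refine ⟨K + 1, LinearMap.ext fun w => ?_⟩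
  obtain ⟨h1, h2⟩ := aff_pow_mem hQ a K w
  rw [hK, AddSubgroup.mem_bot] at h1
  exact Prod.ext h1 h2

/-- Square roots for `∘`, by successive approximation along the chain. -/
theorem exists_sqrt (hQ : B.IsQBrace) {K : ℕ} (hK : B.strongChain K = ⊥) (a : A) :
    ∃ x, B.circ x x = a := by
  have key : ∀ m, ∃ x, a - B.circ x x ∈ B.strongChain m := by
    intro m
    induction m with
    | zero => exact ⟨0, mem_zero B _⟩
    | succ m ih =>
      obtain ⟨x, hx⟩ := ih
      obtain ⟨e, he⟩ : ∃ e, e = a - B.circ x x := ⟨_, rfl⟩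
      rw [← he] at hx
      have hf : (1 / 2 : ℚ) • e ∈ B.strongChain m := chain_smul hQ _ m hx
      obtain ⟨f, hfe⟩ : ∃ f, f = (1 / 2 : ℚ) • e := ⟨_, rfl⟩
      rw [← hfe] at hf
      have hff : f + f = e := by rw [hfe, ← add_smul]; norm_num
      obtain ⟨w, hw⟩ : ∃ w, w = f + B.star (B.inv x) f := ⟨_, rfl⟩
      have hwm : w ∈ B.strongChain m :=
        hw ▸ add_mem hf (chain_succ_le B m (star_mem_left B _ hf))
      have hxw : x + f = B.circ x w := hw ▸ add_eq_circ B x f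
      refine ⟨x + f, ?_⟩
      have h1 : B.star (x + f) (x + f) = B.star x x + B.star x f + B.star w (x + f)
          + B.star x (B.star w (x + f)) := by
        conv_lhs => rw [hxw, star_circ, ← hxw, star_add]
      have h2 : a - B.circ (x + f) (x + f) = - (B.star x f + B.star w (x + f)
          + B.star x (B.star w (x + f))) := by
        rw [circ_eq, h1, eq_add_of_sub_eq he.symm, ← hff, circ_eq B x x]; abel
      rw [h2]
      have h3 := star_mem_right B (x + f) hwm
      exact neg_mem (add_mem (add_mem (star_mem_left B _ hf) h3)
        (chain_succ_le B _ (star_mem_left B x h3)))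
  obtain ⟨x, hx⟩ := key K
  rw [hK, AddSubgroup.mem_bot, sub_eq_zero] at hx
  exact ⟨x, hx.symm⟩

theorem exists_root (hQ : B.IsQBrace) {K : ℕ} (hK : B.strongChain K = ⊥) (a : A) (n : ℕ) :
    ∃ x, (1 + aff hQ x) ^ (2 ^ n) = 1 + aff hQ a := by
  induction n with
  | zero => exact ⟨a, by simp⟩
  | succ n ih =>
    obtain ⟨x, hx⟩ := ih
    obtain ⟨y, rfl⟩ := exists_sqrt hQ hK x
    refine ⟨y, ?_⟩
    rw [← hx, one_add_aff_circ, ← pow_two, ← pow_mul, pow_succ']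

/-! ### One-parameter subgroups -/

/-- `x` lies at time `s` on the one-parameter subgroup with generator `(u, D)`: it is
`∑ s^(i+1)/(i+1)! D^i u` and acts by `λ_x = e^{sD}`. All series are cut at `K`, which is harmless once `D ^ K = 0`. -/
structure IsFlow (B : LeftBrace A) (D : A →ₗ[ℚ] A) (u : A) (K : ℕ) (s : ℚ) (x : A) : Prop where
  eq_sum : x = ∑ i ∈ Finset.range K, ((i + 1).factorial : ℚ)⁻¹ • s ^ (i + 1) • (D ^ i) u
  star_eq : ∀ v, B.star x v =
    ∑ i ∈ Finset.range K, ((i + 1).factorial : ℚ)⁻¹ • s ^ (i + 1) • (D ^ (i + 1)) v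

theorem pow_mem_chain {D : A →ₗ[ℚ] A}
    (hD : ∀ l, ∀ v ∈ B.strongChain l, D v ∈ B.strongChain (l + 1)) {l : ℕ} {v : A}
    (hv : v ∈ B.strongChain l) (i : ℕ) : (D ^ i) v ∈ B.strongChain (l + i) := by
  induction i with
  | zero => simpa using hv
  | succ i ih => rw [pow_succ', Module.End.mul_apply]; exact hD _ _ ih

theorem isFlow_of_exp (hQ : B.IsQBrace) {K : ℕ} (hK : B.strongChain K = ⊥)
    {D : A →ₗ[ℚ] A} {u : A} (hD : ∀ l, ∀ v ∈ B.strongChain l, D v ∈ B.strongChain (l + 1))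
    {M : Module.End ℚ (A × ℚ)} (hM : ∀ w, M w = (D w.1 + w.2 • u, 0)) {s : ℚ} {x : A}
    (hx : 1 + aff hQ x = IsNilpotent.exp (s • M)) : IsFlow B D u K s x := by
  have hDK : ∀ v, (D ^ K) v = 0 := fun v => by
    have := pow_mem_chain hD (mem_zero B v) K
    rwa [zero_add, hK, AddSubgroup.mem_bot] at this
  have hpow : ∀ i w, (M ^ (i + 1)) w = ((D ^ (i + 1)) w.1 + w.2 • (D ^ i) u, 0) := by
    intro i
    induction i with
    | zero => intro w; simp [hM]
    | succ i ih =>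
      intro w
      rw [pow_succ', Module.End.mul_apply, ih, hM, pow_succ' D (i + 1), pow_succ' D i]
      simp [Module.End.mul_apply]
  have hMK : (s • M) ^ (K + 1) = 0 := by
    refine LinearMap.ext fun w => ?_
    rw [smul_pow, LinearMap.smul_apply, hpow, pow_succ' D, Module.End.mul_apply, hDK, hDK]
    simp
  have main : ∀ w, aff hQ x w = ∑ i ∈ Finset.range K,
      ((i + 1).factorial : ℚ)⁻¹ • s ^ (i + 1) • (M ^ (i + 1)) w := by
    intro w
    have h := congrArg (fun f => f w) hx
    rw [IsNilpotent.exp_eq_sum hMK, Finset.sum_range_succ'] at h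
    simp only [LinearMap.add_apply, Module.End.one_apply, LinearMap.sum_apply, pow_zero,
      Nat.factorial_zero, Nat.cast_one, inv_one, one_smul, smul_pow, LinearMap.smul_apply] at h
    rw [add_comm] at h
    exact add_right_cancel h
  constructor
  · have h := congrArg Prod.fst (main (0, 1))
    simpa [aff_apply, star_zero, hpow, Prod.fst_sum] using h
  · intro v
    have h := congrArg Prod.fst (main (v, 0))
    simpa [aff_apply, hpow, Prod.fst_sum] using h

theorem aeval_mem_chain {N : Module.End ℚ (A × ℚ)} {W : Submodule ℚ (A × ℚ)}
    (hN : ∀ w ∈ W, N w ∈ W) (p : ℚ[X]) {w : A × ℚ} (hw : w ∈ W) : aeval N p w ∈ W := by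
  induction p using Polynomial.induction_on' with
  | add p q hp hq => rw [map_add, LinearMap.add_apply]; exact add_mem hp hq
  | monomial i c =>
    rw [aeval_monomial, Module.End.mul_apply, Module.algebraMap_end_apply]
    refine W.smul_mem c ?_
    induction i with
    | zero => simpa using hw
    | succ i ih => rw [pow_succ', Module.End.mul_apply]; exact hN _ ih

/-- Every element is the time-one point of a one-parameter subgroup whose points at the times
`1 / 2 ^ n` all lie in the brace. -/
theorem exists_flow (hQ : B.IsQBrace) {K : ℕ} (hK : B.strongChain K = ⊥) (a : A) :
    ∃ (D : A →ₗ[ℚ] A) (u : A), (∀ l, ∀ v ∈ B.strongChain l, D v ∈ B.strongChain (l + 1)) ∧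
      (∀ k, a ∈ B.strongChain k → u ∈ B.strongChain k) ∧ IsFlow B D u K 1 a ∧
      ∀ n : ℕ, ∃ g, IsFlow B D u K (1 / 2 ^ n) g ∧ IsFlow B D u K (-(1 / 2 ^ n)) (B.inv g) := by
  obtain ⟨p, hp⟩ := exists_log (aff_nilpotent hQ hK a)
  have hMn := isNilpotent_aeval_mul (aff_nilpotent hQ hK a) p
  obtain ⟨M, hMdef⟩ : ∃ M, M = aeval (aff hQ a) p * aff hQ a := ⟨_, rfl⟩
  rw [← hMdef] at hp hMn
  have hmem : ∀ k w, (aff hQ a w).1 ∈ B.strongChain k →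
      (M w).1 ∈ B.strongChain k ∧ (M w).2 = 0 := by
    intro k w hw
    have := aeval_mem_chain (N := aff hQ a) (W := (chain hQ k).prod ⊥) (fun w hw => by
      simp only [Submodule.mem_prod, mem_chain, Submodule.mem_bot] at hw ⊢
      rw [aff_apply, hw.2]
      simpa using chain_succ_le B _ (star_mem_left B a hw.1)) p (w := aff hQ a w)
      (by
        simp only [Submodule.mem_prod, mem_chain, Submodule.mem_bot]
        exact ⟨hw, by rw [aff_apply]⟩)
    rw [hMdef, Module.End.mul_apply]
    simpa only [Submodule.mem_prod, mem_chain, Submodule.mem_bot] using this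
  let D : A →ₗ[ℚ] A := (LinearMap.fst ℚ A ℚ).comp (M.comp (LinearMap.inl ℚ A ℚ))
  have hM : ∀ w, M w = (D w.1 + w.2 • (M (0, 1)).1, 0) := by
    intro w
    refine Prod.ext ?_ (hmem 0 w (mem_zero B _)).2
    have : w = (w.1, 0) + w.2 • ((0, 1) : A × ℚ) := by ext <;> simp
    conv_lhs => rw [this, map_add, map_smul]
    simp [D]
  have hD : ∀ l, ∀ v ∈ B.strongChain l, D v ∈ B.strongChain (l + 1) := fun l v hv =>
    (hmem (l + 1) (v, 0) (by simpa [aff_apply] using star_mem_left B a hv)).1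
  refine ⟨D, (M (0, 1)).1, hD, fun k hk => (hmem k _ ?_).1, ?_, fun n => ?_⟩
  · rw [aff_apply, one_smul, ← starL_apply hQ, map_zero, zero_add]; exact hk
  · exact isFlow_of_exp hQ hK hD hM (by rw [one_smul, hp])
  obtain ⟨x, hx⟩ := exists_root hQ hK a n
  obtain ⟨q, hq⟩ := exists_log (aff_nilpotent hQ hK x)
  have hqn := isNilpotent_aeval_mul (aff_nilpotent hQ hK x) q
  -- both logarithms are polynomials in `aff x`, hence commute
  have hMx : ∃ r : ℚ[X], M = aeval (aff hQ x) r := by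
    have h1 : aff hQ a = aeval (aff hQ x) ((1 + X) ^ 2 ^ n - 1 : ℚ[X]) := by
      simp [hx]
    refine ⟨(p * X).comp ((1 + X) ^ 2 ^ n - 1), ?_⟩
    rw [aeval_comp, ← h1, map_mul, aeval_X, hMdef]
  obtain ⟨r, hr⟩ := hMx
  have hM2 : 2 ^ n • (aeval (aff hQ x) q * aff hQ x) = M := by
    refine exp_injective (hqn.smul _) hMn ?_ ?_
    · have := (Commute.all (q * X) r).map (aeval (aff hQ x))
      rw [map_mul, aeval_X, ← hr] at this
      exact this.smul_left _
    · rw [exp_nsmul hqn, hq, hx, hp]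
  have hs : aeval (aff hQ x) q * aff hQ x = (1 / 2 ^ n : ℚ) • M := by
    rw [← hM2, ← Nat.cast_smul_eq_nsmul ℚ, smul_smul]
    simp
  rw [hs] at hq
  refine ⟨x, isFlow_of_exp hQ hK hD hM hq.symm, isFlow_of_exp hQ hK hD hM ?_⟩
  rw [show -(1 / 2 ^ n : ℚ) • M = -((1 / 2 ^ n : ℚ) • M) from
    LinearMap.ext fun w => by simp only [LinearMap.smul_apply, LinearMap.neg_apply, _root_.neg_smul]]
  have h1 : (1 + aff hQ (B.inv x)) * (1 + aff hQ x) = 1 := by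
    rw [← one_add_aff_circ, inv_circ]
    refine LinearMap.ext fun w => ?_
    simp [aff_apply, zero_star]
  have h2 := IsNilpotent.exp_mul_exp_neg_self (hMn.smul (1 / 2 ^ n : ℚ))
  rw [hq] at h2
  exact left_inv_eq_right_inv h1 h2

end Brace

/-! ### Polynomial sequences and the derived product -/

section PolynomialSequences

variable {A : Type*} [AddCommGroup A] [Module ℚ A] {B : LeftBrace A}

/-- Sequences that are polynomial in `s = 1 / 2 ^ n`, divisible by `s ^ j`, with coefficients
in `A^[k+1]`. -/
def Pol (B : LeftBrace A) (j k : ℕ) : Submodule ℚ (ℕ → A) :=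
  Submodule.span ℚ {f | ∃ i ≥ j, ∃ x ∈ B.strongChain k, f = fun n => ((1 : ℚ) / 2 ^ n) ^ i • x}

theorem monomial_mem {j k i : ℕ} (hi : j ≤ i) {x : A} (hx : x ∈ B.strongChain k) :
    (fun n : ℕ => ((1 : ℚ) / 2 ^ n) ^ i • x) ∈ Pol B j k :=
  Submodule.subset_span ⟨i, hi, x, hx, rfl⟩

theorem const_mem (x : A) : (fun _ : ℕ => x) ∈ Pol B 0 0 := by
  simpa using monomial_mem (B := B) (le_refl 0) (mem_zero B x)

theorem pol_mono {j k j' k' : ℕ} (hj : j' ≤ j) (hk : k' ≤ k) : Pol B j k ≤ Pol B j' k' := by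
  refine Submodule.span_mono ?_
  rintro f ⟨i, hi, x, hx, rfl⟩
  exact ⟨i, hj.trans hi, x, chain_anti B hk hx, rfl⟩

theorem pol_shift {j k : ℕ} (i : ℕ) {f : ℕ → A} (hf : f ∈ Pol B j k) :
    (fun n => ((1 : ℚ) / 2 ^ n) ^ i • f n) ∈ Pol B (j + i) k := by
  induction hf using Submodule.span_induction with
  | mem f hf =>
    obtain ⟨i', hi', x, hx, rfl⟩ := hf
    have := monomial_mem (B := B) (j := j + i) (i := i' + i) (by omega) hx
    simpa only [smul_smul, ← pow_add, add_comm i i'] using this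
  | zero => simp only [Pi.zero_apply, smul_zero]; exact zero_mem _
  | add f g _ _ hf hg => simp only [Pi.add_apply, smul_add]; exact add_mem hf hg
  | smul c f _ hf => simp only [Pi.smul_apply, smul_comm _ c]; exact Submodule.smul_mem _ c hf

theorem pol_unshift {j k : ℕ} {f : ℕ → A} (hf : f ∈ Pol B (j + 1) k) :
    (fun n => (2 ^ n : ℚ) • f n) ∈ Pol B j k := by
  induction hf using Submodule.span_induction with
  | mem f hf =>
    obtain ⟨i, hi, x, hx, rfl⟩ := hf
    obtain ⟨i, rfl⟩ : ∃ i', i = i' + 1 := ⟨i - 1, by omega⟩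
    have := monomial_mem (B := B) (j := j) (i := i) (by omega) hx
    convert this using 2 with n
    rw [smul_smul, pow_succ', ← mul_assoc, mul_one_div_cancel (by positivity), one_mul]
  | zero => simp only [Pi.zero_apply, smul_zero]; exact zero_mem _
  | add f g _ _ hf hg => simp only [Pi.add_apply, smul_add]; exact add_mem hf hg
  | smul c f _ hf => simp only [Pi.smul_apply, smul_comm _ c]; exact Submodule.smul_mem _ c hf

theorem pol_map {D : A →ₗ[ℚ] A} {k l : ℕ}
    (hD : ∀ v ∈ B.strongChain k, D v ∈ B.strongChain l) {j : ℕ} {f : ℕ → A}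
    (hf : f ∈ Pol B j k) : (fun n => D (f n)) ∈ Pol B j l := by
  induction hf using Submodule.span_induction with
  | mem f hf =>
    obtain ⟨i, hi, x, hx, rfl⟩ := hf
    simpa only [map_smul] using monomial_mem hi (hD x hx)
  | zero => simp only [Pi.zero_apply, map_zero]; exact zero_mem _
  | add f g _ _ hf hg => simp only [Pi.add_apply, map_add]; exact add_mem hf hg
  | smul c f _ hf => simp only [Pi.smul_apply, map_smul]; exact Submodule.smul_mem _ c hf

theorem pol_eq_zero {j k : ℕ} (hk : B.strongChain k = ⊥) {f : ℕ → A} (hf : f ∈ Pol B j k) :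
    f = 0 := by
  induction hf using Submodule.span_induction with
  | mem f hf =>
    obtain ⟨i, hi, x, hx, rfl⟩ := hf
    rw [hk, AddSubgroup.mem_bot] at hx
    funext n; simp [hx]
  | zero => rfl
  | add f g _ _ hf hg => rw [hf, hg, add_zero]
  | smul c f _ hf => rw [hf, smul_zero]

theorem pol_tendsto {k : ℕ} {f : ℕ → A} (hf : f ∈ Pol B 1 k) (φ : A →ₗ[ℚ] ℚ) :
    Tendsto (fun n => ((φ (f n) : ℚ) : ℝ)) atTop (𝓝 0) := by
  induction hf using Submodule.span_induction with
  | mem f hf =>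
    obtain ⟨i, hi, x, hx, rfl⟩ := hf
    have h1 : Tendsto (fun n : ℕ => ((1 / 2 : ℝ) ^ i) ^ n * (φ x : ℝ)) atTop (𝓝 (0 * (φ x : ℝ))) :=
      (tendsto_pow_atTop_nhds_zero_of_lt_one (by positivity)
        (pow_lt_one₀ (by norm_num) (by norm_num) (by omega))).mul_const _
    rw [zero_mul] at h1
    refine h1.congr fun n => ?_
    rw [map_smul, smul_eq_mul]
    push_cast
    rw [← pow_mul, mul_comm i n, pow_mul]
    simp
  | zero => simp
  | add f g _ _ hf hg =>
    have := hf.add hg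
    rw [add_zero] at this
    refine this.congr fun n => ?_
    rw [Pi.add_apply, map_add]; push_cast; rfl
  | smul c f _ hf =>
    have := hf.const_mul (c : ℝ)
    rw [mul_zero] at this
    refine this.congr fun n => ?_
    rw [Pi.smul_apply, map_smul, smul_eq_mul]; push_cast; rfl

/-- A sequence `f` in the brace is tame of order `j` if `λ_f` and `λ_f⁻¹` preserve polynomial
sequences, and their differences from the identity gain a factor `s ^ j` and one step of the
chain. -/
def Tame (B : LeftBrace A) (j : ℕ) (f : ℕ → A) : Prop :=
  ∀ i l h, h ∈ Pol B i l → (fun n => B.star (f n) (h n)) ∈ Pol B (i + j) (l + 1) ∧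
    (fun n => B.star (B.inv (f n)) (h n)) ∈ Pol B (i + j) (l + 1)

theorem Tame.mono {i j : ℕ} (hij : i ≤ j) {f : ℕ → A} (hf : Tame B j f) : Tame B i f :=
  fun a l h hh => ⟨pol_mono (by omega) le_rfl (hf a l h hh).1,
    pol_mono (by omega) le_rfl (hf a l h hh).2⟩

theorem Tame.inv {j : ℕ} {f : ℕ → A} (hf : Tame B j f) : Tame B j fun n => B.inv (f n) :=
  fun a l h hh => ⟨(hf a l h hh).2, by simpa only [inv_inv] using (hf a l h hh).1⟩

theorem Tame.circ_aux {j : ℕ} {f g : ℕ → A} (hf : Tame B j f) (hg : Tame B j g) {i l : ℕ}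
    {h : ℕ → A} (hh : h ∈ Pol B i l) :
    (fun n => B.star (B.circ (f n) (g n)) (h n)) ∈ Pol B (i + j) (l + 1) := by
  simp only [star_circ]
  have h1 := (hg i l h hh).1
  exact add_mem (add_mem (hf i l h hh).1 h1)
    (pol_mono (by omega) (by omega) (hf _ _ _ h1).1)

theorem Tame.circ {j : ℕ} {f g : ℕ → A} (hf : Tame B j f) (hg : Tame B j g) :
    Tame B j fun n => B.circ (f n) (g n) :=
  fun _ _ _ hh => ⟨hf.circ_aux hg hh, by
    simpa only [inv_circ_rev] using hg.inv.circ_aux hf.inv hh⟩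

theorem star_mem_of_flow {D : A →ₗ[ℚ] A} {u : A} {K : ℕ}
    (hD : ∀ l, ∀ v ∈ B.strongChain l, D v ∈ B.strongChain (l + 1)) {j : ℕ} {ε : ℚ}
    {g : ℕ → A} (hg : ∀ n : ℕ, IsFlow B D u K (ε * (1 / 2 ^ n) ^ j) (g n)) {i l : ℕ}
    {h : ℕ → A} (hh : h ∈ Pol B i l) :
    (fun n => B.star (g n) (h n)) ∈ Pol B (i + j) (l + 1) := by
  have h1 : (fun n => B.star (g n) (h n)) = ∑ t ∈ Finset.range K,
      (((t + 1).factorial : ℚ)⁻¹ * ε ^ (t + 1)) •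
        fun n : ℕ => ((1 : ℚ) / 2 ^ n) ^ (j * (t + 1)) • (D ^ (t + 1)) (h n) := by
    funext n
    rw [(hg n).star_eq, Finset.sum_apply]
    refine Finset.sum_congr rfl fun t _ => ?_
    rw [Pi.smul_apply, mul_pow, ← pow_mul, smul_smul, smul_smul, mul_assoc]
  rw [h1]
  refine sum_mem fun t _ => Submodule.smul_mem _ _ ?_
  have h2 := pol_map (fun v hv => pow_mem_chain hD hv (t + 1)) hh
  exact pol_mono (by nlinarith) (by omega) (pol_shift (j * (t + 1)) h2)

theorem tame_of_flow {D : A →ₗ[ℚ] A} {u : A} {K : ℕ}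
    (hD : ∀ l, ∀ v ∈ B.strongChain l, D v ∈ B.strongChain (l + 1)) {j : ℕ}
    {g : ℕ → A} (hg : ∀ n : ℕ, IsFlow B D u K ((1 / 2 ^ n) ^ j) (g n))
    (hg' : ∀ n : ℕ, IsFlow B D u K (-(1 / 2 ^ n) ^ j) (B.inv (g n))) : Tame B j g :=
  fun _ _ _ hh => ⟨star_mem_of_flow (ε := 1) hD (by simpa only [one_mul] using hg) hh,
    star_mem_of_flow (ε := -1) hD (by simpa only [neg_one_mul] using hg') hh⟩

/-- Adding a polynomial sequence with coefficients one step deeper in the chain, where all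
polynomial sequences are already known to be tame. -/
theorem Tame.add_of_next {j k : ℕ} (ih : ∀ f ∈ Pol B j (k + 1), Tame B j f) {q r : ℕ → A}
    (hq : Tame B j q) (hr : r ∈ Pol B j (k + 1)) : Tame B j (q + r) := by
  have h1 : (fun n => r n + B.star (B.inv (q n)) (r n)) ∈ Pol B j (k + 1) :=
    add_mem hr (pol_mono (by omega) (by omega) (hq _ _ _ hr).2)
  have h2 := hq.circ (ih _ h1)
  have h3 : q + r = fun n => B.circ (q n) (r n + B.star (B.inv (q n)) (r n)) :=
    funext fun n => add_eq_circ B (q n) (r n)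
  rwa [h3]

/-- Every polynomial sequence is tame: downward induction along the chain. A monomial `s ^ i x`
agrees one step deeper with a sequence of points of a one-parameter subgroup. -/
theorem tame_of_mem (hQ : B.IsQBrace) {K : ℕ} (hK : B.strongChain K = ⊥) (d k : ℕ)
    (hd : K ≤ k + d) (j : ℕ) (f : ℕ → A) (hf : f ∈ Pol B j k) : Tame B j f := by
  induction d generalizing k j f with
  | zero =>
    have hk : B.strongChain k = ⊥ := le_bot_iff.mp (hK ▸ chain_anti B hd)
    rw [pol_eq_zero hk hf]
    have h0 : B.inv (0 : A) = 0 := by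
      have := inv_circ B 0
      rwa [circ_zero] at this
    intro i l h _
    simp only [Pi.zero_apply, h0, zero_star]
    exact ⟨zero_mem _, zero_mem _⟩
  | succ d ih =>
    replace ih := fun j => ih (k + 1) (by omega) j
    suffices H : ∀ c : ℚ, Tame B j (c • f) by simpa using H 1
    induction hf using Submodule.span_induction with
    | mem f hf =>
      obtain ⟨i, hi, x, hx, rfl⟩ := hf
      intro c
      refine Tame.mono hi ?_
      obtain ⟨D, u, hD, hu, h1, hg⟩ := exists_flow hQ hK (c • x)
      choose G hG hG' using hg
      replace hu := hu k (chain_smul hQ c k hx)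
      have hT : Tame B i fun n => G (n * i) := by
        refine tame_of_flow (u := u) (K := K) hD (fun n => ?_) (fun n => ?_)
        · simpa [pow_mul] using hG (n * i)
        · simpa [pow_mul] using hG' (n * i)
      have hr : (fun n : ℕ => ((1 : ℚ) / 2 ^ n) ^ i • (c • x) - G (n * i)) ∈
          Pol B i (k + 1) := by
        have h2 : (fun n : ℕ => ((1 : ℚ) / 2 ^ n) ^ i • (c • x) - G (n * i)) =
            ∑ t ∈ Finset.range K, ((t + 1).factorial : ℚ)⁻¹ •
              ((fun n : ℕ => ((1 : ℚ) / 2 ^ n) ^ i • (D ^ t) u) -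
                fun n : ℕ => ((1 : ℚ) / 2 ^ n) ^ (i * (t + 1)) • (D ^ t) u) := by
          funext n
          rw [(hG (n * i)).eq_sum, h1.eq_sum, Finset.sum_apply, Finset.smul_sum,
            ← Finset.sum_sub_distrib]
          refine Finset.sum_congr rfl fun t _ => ?_
          rw [Pi.smul_apply, Pi.sub_apply, smul_sub, one_pow, one_smul, smul_comm]
          congr 3
          rw [pow_mul, pow_mul]
          simp
        rw [h2]
        refine sum_mem fun t _ => Submodule.smul_mem _ _ ?_
        rcases Nat.eq_zero_or_pos t with rfl | ht
        · simp
        · have h3 : (D ^ t) u ∈ B.strongChain (k + 1) :=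
            chain_anti B (by omega) (pow_mem_chain hD hu t)
          exact sub_mem (monomial_mem le_rfl h3) (monomial_mem (by nlinarith) h3)
      have h4 := hT.add_of_next (ih i) hr
      convert h4 using 1
      funext n
      simp [smul_comm c]
    | zero => intro c; simpa using ih j 0 (zero_mem _)
    | add p q hp hq hp' hq' =>
      intro c
      rw [smul_add]
      have h1 := (hp' c _ _ _ (Submodule.smul_mem _ c hq)).2
      have h2 := (hq' c).add_of_next (ih j) (pol_mono (by omega) le_rfl h1)
      have h3 := (hp' c).circ h2
      have h4 : c • p + c • q = fun n => B.circ ((c • p) n)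
          ((c • q + fun n => B.star (B.inv ((c • p) n)) ((c • q) n)) n) :=
        funext fun n => add_eq_circ B _ _
      rwa [h4]
    | smul e f _ hf => intro c; rw [smul_smul]; exact hf (c * e)

/-- The generator `D` of a one-parameter subgroup is left multiplication by its velocity `u`
for the derived product. -/
theorem derived_eq (hQ : B.IsQBrace) {K : ℕ} (hK : B.strongChain (K + 1) = ⊥)
    {mul : A → A → A} (hmul : B.IsDerivedMul mul) {D : A →ₗ[ℚ] A} {u : A} {G : ℕ → A}
    (hG : ∀ n : ℕ, IsFlow B D u (K + 1) (1 / 2 ^ n) (G n)) (b : A) : mul u b = D b := by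
  have tame : ∀ j, ∀ f ∈ Pol B j 0, Tame B j f := tame_of_mem hQ hK (K + 1) 0 (by omega)
  obtain ⟨f, hf⟩ : ∃ f : ℕ → A, f = fun n : ℕ => ((1 : ℚ) / 2 ^ n) • u := ⟨_, rfl⟩
  have hfP : f ∈ Pol B 1 0 := by
    simpa only [pow_one, ← hf] using monomial_mem (B := B) (le_refl 1) (mem_zero B u)
  have hfT := tame 1 f hfP
  -- `G - f = O(s ^ 2)`
  have hR : G - f ∈ Pol B 2 0 := by
    have h1 : G - f = ∑ t ∈ Finset.range K, (((t + 1 + 1).factorial : ℚ)⁻¹) •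
        fun n : ℕ => ((1 : ℚ) / 2 ^ n) ^ (t + 1 + 1) • (D ^ (t + 1)) u := by
      funext n
      rw [Pi.sub_apply, (hG n).eq_sum, Finset.sum_range_succ', hf, Finset.sum_apply]
      simp
    rw [h1]
    exact sum_mem fun t _ => Submodule.smul_mem _ _ (monomial_mem (by omega) (mem_zero B _))
  obtain ⟨w, hw⟩ : ∃ w : ℕ → A, w = (G - f) + fun n => B.star (B.inv (f n)) ((G - f) n) :=
    ⟨_, rfl⟩
  have hwP : w ∈ Pol B 2 0 :=
    hw ▸ add_mem hR (pol_mono (by omega) (by omega) (hfT _ _ _ hR).2)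
  have hGw : ∀ n, G n = B.circ (f n) (w n) := fun n => by
    have := add_eq_circ B (f n) ((G - f) n)
    rw [hw, Pi.add_apply, ← this, Pi.sub_apply, add_sub_cancel]
  have hwb := (tame 2 w hwP _ _ _ (const_mem b)).1
  have hfwb := (hfT _ _ _ hwb).1
  have hGb : (fun n : ℕ => B.star (G n) b - ((1 : ℚ) / 2 ^ n) • D b) ∈ Pol B 2 0 := by
    have h1 : (fun n : ℕ => B.star (G n) b - ((1 : ℚ) / 2 ^ n) • D b) =
        ∑ t ∈ Finset.range K, (((t + 1 + 1).factorial : ℚ)⁻¹) •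
        fun n : ℕ => ((1 : ℚ) / 2 ^ n) ^ (t + 1 + 1) • (D ^ (t + 1 + 1)) b := by
      funext n
      rw [(hG n).star_eq, Finset.sum_range_succ', Finset.sum_apply]
      simp
    rw [h1]
    exact sum_mem fun t _ => Submodule.smul_mem _ _ (monomial_mem (by omega) (mem_zero B _))
  have he : (fun n : ℕ => B.star (f n) b - ((1 : ℚ) / 2 ^ n) • D b) ∈ Pol B (1 + 1) 0 := by
    have h1 := sub_mem (sub_mem hGb (pol_mono (j' := 2) (k' := 0) (by omega) (by omega) hwb))
      (pol_mono (j' := 2) (k' := 0) (by omega) (by omega) hfwb)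
    convert h1 using 1
    funext n
    simp only [Pi.sub_apply, hGw n, star_circ]
    abel
  have he' := pol_unshift he
  refine sub_eq_zero.mp ((Module.forall_dual_apply_eq_zero_iff ℚ _).mp fun φ => ?_)
  rw [map_sub, sub_eq_zero]
  have h1 := (pol_tendsto he' φ).add_const ((φ (D b) : ℚ) : ℝ)
  rw [zero_add] at h1
  have h2 := hmul u b φ
  have h3 := tendsto_nhds_unique h2 (h1.congr fun n => ?_)
  · exact_mod_cast h3
  · rw [← Rat.cast_add, ← map_add, smul_sub, smul_smul, hf]
    simp

end PolynomialSequences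

/-! ### Comparison with the group of flows -/

theorem sum_range_eq_of_vanish {A : Type*} [AddCommGroup A] {f : ℕ → A} {m n : ℕ}
    (hm : ∀ i, m ≤ i → f i = 0) (hn : ∀ i, n ≤ i → f i = 0) :
    ∑ i ∈ Finset.range m, f i = ∑ i ∈ Finset.range n, f i := by
  rcases le_total m n with h | h
  · exact Finset.sum_subset (Finset.range_mono h) fun i _ hi => hm i (by simpa using hi)
  · exact (Finset.sum_subset (Finset.range_mono h) fun i _ hi => hn i (by simpa using hi)).symm

theorem iterate_mul_eq_zero {A : Type*} [AddCommGroup A] [Module ℚ A] {P : PreLieAlg ℚ A}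
    {n : ℕ} (hn : P.IsNilpotentOf n) (u b : A) (k : ℕ) (hk : n ≤ k + 1) :
    (P.mul u)^[k] b = 0 := by
  have hprod : ∀ k c, P.IsProd ((P.mul u)^[k] c) (k + 1) := by
    intro k c
    induction k with
    | zero => exact .single c
    | succ k ih =>
      rw [Function.iterate_succ_apply', add_comm]
      exact .node (.single u) ih
  obtain ⟨m, rfl⟩ : ∃ m, k = (n - 1) + m := ⟨k - (n - 1), by omega⟩
  rw [Function.iterate_add_apply]
  refine hn.2 _ ?_
  have := hprod (n - 1) ((P.mul u)^[m] b)
  rwa [Nat.sub_add_cancel hn.1] at this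

end QBraceFlow

/-- The original brace multiplication coincides with the group-of-flows
multiplication of the derived pre-Lie algebra. -/
theorem statement15 {A : Type*} [AddCommGroup A] [Module ℚ A] (B : LeftBrace A)
    (hQ : B.IsQBrace) (hSN : B.StronglyNilpotent)
    (P : PreLieAlg ℚ A) (hmul : B.IsDerivedMul P.mul)
    (n : ℕ) (hn : P.IsNilpotentOf n)
    (Ω : A → A) (hΩ₁ : ∀ a, P.W n (Ω a) = a) (hΩ₂ : ∀ a, Ω (P.W n a) = a)
    (a b : A) :
    B.circ a b = P.flow n Ω a b := by
  obtain ⟨K, hK₀⟩ := hSN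
  have hK : B.strongChain (K + 1) = ⊥ :=
    le_bot_iff.mp (hK₀ ▸ QBraceFlow.chain_succ_le B K)
  obtain ⟨D, u, hD, -, h1, hg⟩ := QBraceFlow.exists_flow hQ hK a
  choose G hG _ using hg
  have hDmul : ∀ c, P.mul u c = D c := fun c => QBraceFlow.derived_eq hQ hK hmul hG c
  have hiter : ∀ k c, (P.mul u)^[k] c = (D ^ k) c := by
    intro k c
    rw [Module.End.pow_apply, show P.mul u = D from funext hDmul]
  have hDK : ∀ k c, K + 1 ≤ k → (D ^ k) c = 0 := by
    intro k c hk
    have := QBraceFlow.chain_anti B (by omega : K + 1 ≤ 0 + k)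
      (QBraceFlow.pow_mem_chain hD (QBraceFlow.mem_zero B c) k)
    rwa [hK, AddSubgroup.mem_bot] at this
  have hPn : ∀ k c, n ≤ k + 1 → (D ^ k) c = 0 := fun k c hk => by
    rw [← hiter]; exact QBraceFlow.iterate_mul_eq_zero hn u c k hk
  have hW : P.W n u = a := by
    rw [PreLieAlg.W, h1.eq_sum]
    simp only [hiter, one_pow, one_smul]
    refine QBraceFlow.sum_range_eq_of_vanish (fun i hi => ?_) fun i hi => ?_
    · rw [hPn i u (by omega), smul_zero]
    · rw [hDK i u hi, smul_zero]
  have hΩ : Ω a = u := by rw [← hW, hΩ₂]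
  have hE : P.expL n u b = b + B.star a b := by
    rw [PreLieAlg.expL, h1.star_eq]
    simp only [hiter, one_pow, one_smul]
    rw [QBraceFlow.sum_range_eq_of_vanish (n := K + 1 + 1)
      (fun i hi => by rw [hPn i b (by omega), smul_zero])
      (fun i hi => by rw [hDK i b (by omega), smul_zero]), Finset.sum_range_succ', add_comm]
    simp
  rw [PreLieAlg.flow, hΩ, hE, QBraceFlow.circ_eq, add_assoc]
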